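/- Let n ≥ m ≥ 1, let A and B be finite alphabets and let φ : A* → B* be a monoid morphism. If u, v ∈ A* satisfy u ⊳_{m,n} v, then φ(u) ⊳_{m,n} φ(v) (with the relation ⊳_{m,n} on B* defined via rankers over B); likewise, if u ⊲_{m,n} v then φ(u) ⊲_{m,n} φ(v). -/

import Mathlib

namespace RankerPaper

variable {A : Type*} [DecidableEq A]

/-- Letters of rankers: `X a` ("next `a` to the right") and `Y a` ("next `a` to the left"). -/
inductive RLetter (A : Type*) where
  | X : A → RLetter A
  | Y : A → RLetter A
  deriving DecidableEq

/-- Least `a`-position of `u` strictly greater than `q` (positions are 1-indexed). -/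
def nextOcc (u : List A) (a : A) (q : ℕ) : Option ℕ :=
  ((List.range (u.length + 2)).filter (fun i => decide (q < i ∧ u[i-1]? = some a))).head?

/-- Greatest `a`-position of `u` strictly less than `q` (positions are 1-indexed). -/
def prevOcc (u : List A) (a : A) (q : ℕ) : Option ℕ :=
  ((List.range (u.length + 2)).filter
    (fun i => decide (1 ≤ i ∧ i < q ∧ u[i-1]? = some a))).getLast?

/-- One evaluation step of a ranker letter from position `q`. -/
def stepR (u : List A) : RLetter A → ℕ → Option ℕ
  | .X a, q => nextOcc u a q
  | .Y a, q => prevOcc u a q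

/-- Evaluation of a ranker from position `q`, processing letters left to right. -/
def evalFrom (u : List A) : List (RLetter A) → ℕ → Option ℕ
  | [], q => some q
  | z :: r, q => (stepR u z q).bind (evalFrom u r)

/-- Starting position: `0` for an `X`-letter, `|u|+1` for a `Y`-letter. -/
def startPos (u : List A) : RLetter A → ℕ
  | .X _ => 0
  | .Y _ => u.length + 1

/-- The position `r(u)` defined by the ranker `r` on `u` (`none` if undefined;
empty rankers are considered undefined, rankers being nonempty words). -/
def evalR (u : List A) (r : List (RLetter A)) : Option ℕ :=
  match r with
  | [] => none
  | z :: t => evalFrom u (z :: t) (startPos u z)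

/-- `r` is defined on `u`. -/
def Defined (u : List A) (r : List (RLetter A)) : Prop := (evalR u r).isSome

/-- The position `r(u)` (defaulting to `0` when undefined). -/
def pos (u : List A) (r : List (RLetter A)) : ℕ := (evalR u r).getD 0

/-- Do two ranker letters have the same direction? -/
def sameDir : RLetter A → RLetter A → Bool
  | .X _, .X _ => true
  | .Y _, .Y _ => true
  | _, _ => false

/-- Number of (alternating) blocks of a ranker. -/
def numBlocks : List (RLetter A) → ℕ
  | [] => 0
  | [_] => 1
  | z :: w :: t => (if sameDir z w then 0 else 1) + numBlocks (w :: t)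

def startsX (r : List (RLetter A)) : Prop := ∃ a t, r = RLetter.X a :: t
def startsY (r : List (RLetter A)) : Prop := ∃ a t, r = RLetter.Y a :: t
def endsX (r : List (RLetter A)) : Prop := ∃ a, r.getLast? = some (RLetter.X a)
def endsY (r : List (RLetter A)) : Prop := ∃ a, r.getLast? = some (RLetter.Y a)

/-- `R^X_{m,n}`: rankers with exactly `m` blocks, depth `n`, starting with an `X`-block. -/
def RX (m n : ℕ) (r : List (RLetter A)) : Prop :=
  numBlocks r = m ∧ r.length = n ∧ startsX r

/-- `R^Y_{m,n}`: rankers with exactly `m` blocks, depth `n`, starting with a `Y`-block. -/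
def RY (m n : ℕ) (r : List (RLetter A)) : Prop :=
  numBlocks r = m ∧ r.length = n ∧ startsY r

/-- `uR^X_{m,n}`. -/
def uRX (m n : ℕ) (r : List (RLetter A)) : Prop :=
  (∃ m' n', m' ≤ m ∧ n' ≤ n ∧ RX m' n' r) ∨ (∃ m' n', m' < m ∧ n' < n ∧ RY m' n' r)

/-- `uR^Y_{m,n}`. -/
def uRY (m n : ℕ) (r : List (RLetter A)) : Prop :=
  (∃ m' n', m' ≤ m ∧ n' ≤ n ∧ RY m' n' r) ∨ (∃ m' n', m' < m ∧ n' < n ∧ RX m' n' r)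

/-- `uR_{m,n} = uR^X_{m,n} ∪ uR^Y_{m,n}`. -/
def uR (m n : ℕ) (r : List (RLetter A)) : Prop := uRX m n r ∨ uRY m n r

/-- `uR^X_m = ∪_{n ≥ m} uR^X_{m,n}`. -/
def uRXm (m : ℕ) (r : List (RLetter A)) : Prop := ∃ n, m ≤ n ∧ uRX m n r

/-- `uR^Y_m = ∪_{n ≥ m} uR^Y_{m,n}`. -/
def uRYm (m : ℕ) (r : List (RLetter A)) : Prop := ∃ n, m ≤ n ∧ uRY m n r

/-- `r = Z₁ ⋯ Z_n` is condensed on `u`: it is defined on `u` and there is a chain of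
open intervals `(0;|u|+1) = (i₀;j₀) ⊃ (i₁;j₁) ⊃ ⋯ ⊃ (i_{n-1};j_{n-1}) ∋ r(u)`
updated according to the pairs `Z_ℓ Z_{ℓ+1}`. -/
def Condensed (u : List A) (r : List (RLetter A)) : Prop :=
  ∃ (p : ℕ) (i j : ℕ → ℕ),
    evalR u r = some p ∧
    i 0 = 0 ∧ j 0 = u.length + 1 ∧
    (∀ ℓ a b, 1 ≤ ℓ → r[ℓ-1]? = some (RLetter.X a) → r[ℓ]? = some (RLetter.X b) →
        nextOcc u a (i (ℓ-1)) = some (i ℓ) ∧ j ℓ = j (ℓ-1)) ∧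
    (∀ ℓ a b, 1 ≤ ℓ → r[ℓ-1]? = some (RLetter.Y a) → r[ℓ]? = some (RLetter.Y b) →
        i ℓ = i (ℓ-1) ∧ prevOcc u a (j (ℓ-1)) = some (j ℓ)) ∧
    (∀ ℓ a b, 1 ≤ ℓ → r[ℓ-1]? = some (RLetter.X a) → r[ℓ]? = some (RLetter.Y b) →
        i ℓ = i (ℓ-1) ∧ nextOcc u a (i (ℓ-1)) = some (j ℓ)) ∧
    (∀ ℓ a b, 1 ≤ ℓ → r[ℓ-1]? = some (RLetter.Y a) → r[ℓ]? = some (RLetter.X b) →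
        prevOcc u a (j (ℓ-1)) = some (i ℓ) ∧ j ℓ = j (ℓ-1)) ∧
    (∀ ℓ, 1 ≤ ℓ → ℓ < r.length →
        i (ℓ-1) ≤ i ℓ ∧ j ℓ ≤ j (ℓ-1) ∧ (i (ℓ-1) < i ℓ ∨ j ℓ < j (ℓ-1))) ∧
    i (r.length - 1) < p ∧ p < j (r.length - 1)

/-- `u` and `v` agree on rankers from the set `R`. -/
def AgreeDef (R : List (RLetter A) → Prop) (u v : List A) : Prop :=
  ∀ r, R r → (Defined u r ↔ Defined v r)

/-- `u` and `v` agree on condensed rankers from the set `R`. -/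
def AgreeCond (R : List (RLetter A) → Prop) (u v : List A) : Prop :=
  ∀ r, R r → (Condensed u r ↔ Condensed v r)

/-- `u ⊳_{m,n} v`. -/
def trir (m n : ℕ) (u v : List A) : Prop := AgreeCond (uRX m n) u v

/-- `u ⊲_{m,n} v`. -/
def tril (m n : ℕ) (u v : List A) : Prop := AgreeCond (uRY m n) u v

/-- The alphabet (set of letters) of a word. -/
def alph (u : List A) : Finset A := u.toFinset

/-- Condition (WI 1). -/
def WI1 (m n : ℕ) (u v : List A) : Prop := AgreeDef (uR m n) u v

/-- Condition (WI 2). -/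
def WI2 (m n : ℕ) (u v : List A) : Prop :=
  ∀ r r', uR m n r → uR (m-1) (n-1) r' →
    Defined u r → Defined v r → Defined u r' → Defined v r' →
    compare (pos u r) (pos u r') = compare (pos v r) (pos v r')

/-- Condition (WI 3). -/
def WI3 (m n : ℕ) (u v : List A) : Prop :=
  ∀ r r', uR m n r → uR m (n-1) r' →
    ((endsX r ∧ endsY r') ∨ (endsY r ∧ endsX r')) →
    Defined u r → Defined v r → Defined u r' → Defined v r' →
    compare (pos u r) (pos u r') = compare (pos v r) (pos v r')

/-- Condition (WI 1c). -/
def WI1c (m n : ℕ) (u v : List A) : Prop := AgreeCond (uR m n) u v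

/-- Condition (WI 2c). -/
def WI2c (m n : ℕ) (u v : List A) : Prop :=
  ∀ r r', uR m n r → uR (m-1) (n-1) r' →
    Condensed u r → Condensed v r → Condensed u r' → Condensed v r' →
    compare (pos u r) (pos u r') = compare (pos v r) (pos v r')

/-- Condition (WI 3c). -/
def WI3c (m n : ℕ) (u v : List A) : Prop :=
  ∀ r r', uR m n r → uR m (n-1) r' →
    ((endsX r ∧ endsY r') ∨ (endsY r ∧ endsX r')) →
    Condensed u r → Condensed v r → Condensed u r' → Condensed v r' →
    compare (pos u r) (pos u r') = compare (pos v r) (pos v r')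

/-!
A condensed ranker reads a word by repeated factorization: its first letter splits the word at a
first or last occurrence, and the rest of the ranker is a condensed ranker of one of the two
factors. This turns `⊳` into a back-and-forth relation: `u ⊳_{m+1,n+1} v` holds if and only if
`u ⊲_{m,n} v`, both words have the same letters, and for each of these letters `a` the
factorizations `u = u₀ a u₁` and `v = v₀ a v₁` at the first `a` satisfy `u₀ ⊲_{m,n} v₀` and
`u₁ ⊳_{m+1,n} v₁`. Reversing words exchanges `⊳` and `⊲`.

By induction on `n`, the criterion shows that `⊳_{m,n}` is compatible with concatenation. A further
induction on `n` gives the theorem for `m ≥ 2`: the first `b` in `φ(u)` lies in the image of the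
first `a` in `u` with `b ∈ φ(a)`, and the corresponding `a` in `v` has the same property because
`φ(u₀)` and `φ(v₀)` have the same letters. This last fact is not available for `m = 1`, but
`u ⊳_{1,n} v` just says that `u` and `v` have the same scattered subwords of length at most `n`.
-/

section Lists

variable {α β : Type*}

theorem head?_eq_some_iff_isLeast [PartialOrder α] {l : List α} (hl : l.Pairwise (· < ·)) {p : α} :
    l.head? = some p ↔ IsLeast {i | i ∈ l} p := by
  cases l with
  | nil => simp [IsLeast]
  | cons b l =>
    have hb : IsLeast {i | i ∈ b :: l} b :=
      ⟨List.mem_cons_self, List.forall_mem_cons.2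
        ⟨le_rfl, fun c hc => (List.rel_of_pairwise_cons hl hc).le⟩⟩
    rw [List.head?_cons, Option.some_inj]
    exact ⟨fun h => h ▸ hb, hb.unique⟩

theorem getLast?_eq_some_iff_isGreatest [PartialOrder α] {l : List α} (hl : l.Pairwise (· < ·))
    {p : α} : l.getLast? = some p ↔ IsGreatest {i | i ∈ l} p := by
  have h : l.reverse.head? = some p ↔ IsGreatest {i | i ∈ l.reverse} p :=
    head?_eq_some_iff_isLeast (α := αᵒᵈ) (List.pairwise_reverse.2 hl)
  simpa only [List.head?_reverse, List.mem_reverse] using h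

theorem exists_last_occurrence {a : α} {l : List α} (h : a ∈ l) :
    ∃ l₀ l₁, l = l₀ ++ a :: l₁ ∧ a ∉ l₁ := by
  obtain ⟨l₁, l₀, hl, ha⟩ := List.eq_append_cons_of_mem (List.mem_reverse.2 h)
  exact ⟨l₀.reverse, l₁.reverse, by simpa using congrArg List.reverse hl, by simpa using ha⟩

theorem first_occurrence_unique {a : α} {x x' y y' : List α} (h : x ++ a :: y = x' ++ a :: y')
    (hx : a ∉ x) (hx' : a ∉ x') : x = x' ∧ y = y' := by
  rcases List.append_eq_append_iff.1 h with ⟨_ | ⟨b, z⟩, rfl, h⟩ | ⟨_ | ⟨b, z⟩, rfl, h⟩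
  · simpa using h
  · simp_all
  · simpa [eq_comm] using h
  · simp_all

theorem cons_sublist_append_cons_iff {a : α} {w x y : List α} (h : a ∉ x) :
    (a :: w).Sublist (x ++ a :: y) ↔ w.Sublist y := by
  induction x with
  | nil => exact List.cons_sublist_cons
  | cons c x ih =>
    rw [List.mem_cons, not_or] at h
    simp [List.cons_sublist_cons', ih h.2, h.1]

theorem exists_sublist_of_sublist_flatMap {f : α → List β} {u : List α} {w : List β}
    (hw : w.Sublist (u.flatMap f)) :
    ∃ v : List α, v.Sublist u ∧ v.length ≤ w.length ∧ w.Sublist (v.flatMap f) := by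
  induction u generalizing w with
  | nil => exact ⟨[], List.Sublist.refl _, Nat.zero_le _, hw⟩
  | cons a u ih =>
    rw [List.flatMap_cons, List.sublist_append_iff] at hw
    obtain ⟨w₁, w₂, rfl, h₁, h₂⟩ := hw
    obtain ⟨v, hvu, hlen, hv⟩ := ih h₂
    rcases w₁ with _ | ⟨b, w₁⟩
    · exact ⟨v, hvu.cons a, by simpa using hlen, by simpa using hv⟩
    · refine ⟨a :: v, hvu.cons_cons a, by simp; omega, ?_⟩
      rw [List.flatMap_cons]
      exact h₁.append hv

theorem exists_first_of_mem_flatMap {f : α → List β} {u : List α} {b : β}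
    (hb : b ∈ u.flatMap f) :
    ∃ u₀ a u₁, u = u₀ ++ a :: u₁ ∧ b ∈ f a ∧ b ∉ u₀.flatMap f := by
  classical
  have hfind : (u.find? (fun a => decide (b ∈ f a))).isSome := by
    simpa using List.mem_flatMap.1 hb
  obtain ⟨a, ha⟩ := Option.isSome_iff_exists.1 hfind
  obtain ⟨hba, u₀, u₁, rfl, hu₀⟩ := List.find?_eq_some_iff_append.1 ha
  exact ⟨u₀, a, u₁, rfl, by simpa using hba, by simpa using hu₀⟩

theorem mem_of_getElem?_append {L w R : List α} {a : α} {k : ℕ} (hL : L.length ≤ k)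
    (hR : k < L.length + w.length) (h : (L ++ w ++ R)[k]? = some a) : a ∈ w := by
  rw [List.append_assoc, List.getElem?_append_right hL,
    List.getElem?_append_left (by omega)] at h
  exact List.mem_of_getElem? h

end Lists

section Occurrences

theorem nextOcc_eq_some_iff {u : List A} {a : A} {q p : ℕ} :
    nextOcc u a q = some p ↔ IsLeast {i | q < i ∧ u[i - 1]? = some a} p := by
  rw [nextOcc, head?_eq_some_iff_isLeast (List.pairwise_lt_range.filter _)]
  congr! 2
  ext i
  simp only [List.mem_filter, List.mem_range, decide_eq_true_eq, and_iff_right_iff_imp, and_imp]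
  intro _ h
  have := (List.getElem?_eq_some_iff.1 h).1
  omega

theorem prevOcc_eq_some_iff {u : List A} {a : A} {q p : ℕ} :
    prevOcc u a q = some p ↔ IsGreatest {i | 1 ≤ i ∧ i < q ∧ u[i - 1]? = some a} p := by
  rw [prevOcc, getLast?_eq_some_iff_isGreatest (List.pairwise_lt_range.filter _)]
  congr! 2
  ext i
  simp only [List.mem_filter, List.mem_range, decide_eq_true_eq, and_iff_right_iff_imp, and_imp]
  intro _ _ h
  have := (List.getElem?_eq_some_iff.1 h).1
  omega

theorem nextOcc_append {a : A} {x : List A} (ha : a ∉ x) (L R : List A) :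
    nextOcc (L ++ x ++ a :: R) a L.length = some (L.length + x.length + 1) := by
  refine nextOcc_eq_some_iff.2 ⟨⟨by omega, by simp⟩, fun k ⟨hk, hka⟩ => ?_⟩
  by_contra! hlt
  exact ha (mem_of_getElem?_append (by omega) (by omega) hka)

theorem prevOcc_append {a : A} {x : List A} (ha : a ∉ x) (L R : List A) :
    prevOcc (L ++ a :: x ++ R) a (L.length + x.length + 2) = some (L.length + 1) := by
  refine prevOcc_eq_some_iff.2 ⟨⟨by omega, by omega, by simp⟩, fun k ⟨_, hk, hka⟩ => ?_⟩
  by_contra! hlt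
  rw [List.append_cons] at hka
  exact ha (mem_of_getElem?_append (by simp; omega) (by simp; omega) hka)

end Occurrences

namespace RLetter

variable {α : Type*}

/-- The end of the open interval `I` from which a ranker letter searches. -/
def origin : RLetter α → ℕ × ℕ → ℕ
  | X _, I => I.1
  | Y _, I => I.2

/-- The part of the open interval `I` next to the position `q` that the ranker letter searches once
`q` has been reached: the part after `q` for an `X`-letter, the part before `q` for a `Y`-letter. -/
def narrow : RLetter α → ℕ × ℕ → ℕ → ℕ × ℕ
  | X _, I, q => (q, I.2)
  | Y _, I, q => (I.1, q)

/-- The counterpart of `RLetter.narrow` for a factorization `u = u₀ ++ a :: u₁`: the factor that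
the ranker letter searches from the distinguished occurrence of `a`. -/
def side : RLetter α → List α → List α → List α
  | X _, _, u₁ => u₁
  | Y _, u₀, _ => u₀

/-- `z.IsSplit u u₀ u₁` means that `u = u₀ ++ a :: u₁`, where the displayed `a` is the first
occurrence in `u` if `z = X a` and the last one if `z = Y a`. -/
def IsSplit : RLetter α → List α → List α → List α → Prop
  | X a, u, u₀, u₁ => u = u₀ ++ a :: u₁ ∧ a ∉ u₀
  | Y a, u, u₀, u₁ => u = u₀ ++ a :: u₁ ∧ a ∉ u₁

theorem origin_narrow (y : RLetter α) (I : ℕ × ℕ) (q : ℕ) : y.origin (y.narrow I q) = q := by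
  cases y <;> rfl

theorem startPos_eq_origin (u : List α) (z : RLetter α) :
    startPos u z = z.origin (0, u.length + 1) := by
  cases z <;> rfl

end RLetter

open RLetter

section Condensed

/-- Condensedness of the ranker `z :: t` relative to an arbitrary initial interval `I₀`, with the
four update rules of `Condensed` merged into one. -/
def IntervalChain (u : List A) (I₀ : ℕ × ℕ) (z : RLetter A) (t : List (RLetter A)) : Prop :=
  ∃ (p : ℕ) (I : ℕ → ℕ × ℕ),
    evalFrom u (z :: t) (z.origin I₀) = some p ∧ I 0 = I₀ ∧
    (∀ ℓ x y, (z :: t)[ℓ]? = some x → (z :: t)[ℓ + 1]? = some y →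
      ∃ q, stepR u x (x.origin (I ℓ)) = some q ∧ I (ℓ + 1) = y.narrow (I ℓ) q) ∧
    (∀ ℓ < t.length, (I ℓ).1 ≤ (I (ℓ + 1)).1 ∧ (I (ℓ + 1)).2 ≤ (I ℓ).2 ∧
      ((I ℓ).1 < (I (ℓ + 1)).1 ∨ (I (ℓ + 1)).2 < (I ℓ).2)) ∧
    p ∈ Set.Ioo (I t.length).1 (I t.length).2

/-- A ranker is factor-condensed on `u` if it can be read by repeated factorization: its first
letter splits `u` as `u₀ ++ a :: u₁`, and the rest is factor-condensed on the factor `u₀` or `u₁`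
towards which the second letter points. Positions play no role; see
`condensed_iff_factorCondensed`. -/
def FactorCondensed {α : Type*} : List α → List (RLetter α) → Prop
  | _, [] => False
  | u, z :: s => ∃ u₀ u₁, z.IsSplit u u₀ u₁ ∧ ∀ y ∈ s.head?, FactorCondensed (y.side u₀ u₁) s

theorem condensed_cons_iff_intervalChain (u : List A) (z : RLetter A) (t : List (RLetter A)) :
    Condensed u (z :: t) ↔ IntervalChain u (0, u.length + 1) z t := by
  constructor
  · rintro ⟨p, i, j, heval, hi, hj, hXX, hYY, hXY, hYX, hshrink, hp⟩
    refine ⟨p, fun ℓ => (i ℓ, j ℓ), startPos_eq_origin u z ▸ heval, Prod.ext hi hj, ?_,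
      fun ℓ hℓ => hshrink (ℓ + 1) (by omega) (Nat.succ_lt_succ hℓ), hp⟩
    rintro ℓ (a | a) (b | b) hx hy
    · obtain ⟨hstep, hj⟩ := hXX (ℓ + 1) a b (by omega) hx hy
      exact ⟨_, hstep, congrArg _ hj⟩
    · obtain ⟨hi, hstep⟩ := hXY (ℓ + 1) a b (by omega) hx hy
      exact ⟨_, hstep, congrArg (·, _) hi⟩
    · obtain ⟨hstep, hj⟩ := hYX (ℓ + 1) a b (by omega) hx hy
      exact ⟨_, hstep, congrArg _ hj⟩
    · obtain ⟨hi, hstep⟩ := hYY (ℓ + 1) a b (by omega) hx hy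
      exact ⟨_, hstep, congrArg (·, _) hi⟩
  · rintro ⟨p, I, heval, hI, hupdate, hshrink, hp⟩
    have hupdate' : ∀ ℓ x y, 1 ≤ ℓ → (z :: t)[ℓ - 1]? = some x → (z :: t)[ℓ]? = some y →
        ∃ q, stepR u x (x.origin (I (ℓ - 1))) = some q ∧ I ℓ = y.narrow (I (ℓ - 1)) q := by
      rintro (_ | ℓ) x y hℓ hx hy
      · omega
      · exact hupdate ℓ x y hx hy
    refine ⟨p, fun ℓ => (I ℓ).1, fun ℓ => (I ℓ).2, by rwa [evalR, startPos_eq_origin],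
      congrArg Prod.fst hI, congrArg Prod.snd hI, ?_, ?_, ?_, ?_, ?_, hp⟩
    on_goal 5 =>
      rintro (_ | ℓ) hℓ hlt
      · omega
      · exact hshrink ℓ (Nat.lt_of_succ_lt_succ hlt)
    all_goals
      intro ℓ a b hℓ hx hy
      obtain ⟨q, hq, hIℓ⟩ := hupdate' ℓ _ _ hℓ hx hy
      dsimp only
      rw [hIℓ]
    · exact ⟨hq, rfl⟩
    · exact ⟨rfl, hq⟩
    · exact ⟨rfl, hq⟩
    · exact ⟨hq, rfl⟩

theorem intervalChain_nil_iff {u : List A} {I₀ : ℕ × ℕ} {z : RLetter A} :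
    IntervalChain u I₀ z [] ↔ ∃ q, stepR u z (z.origin I₀) = some q ∧ q ∈ Set.Ioo I₀.1 I₀.2 := by
  constructor
  · rintro ⟨p, I, heval, rfl, -, -, hp⟩
    exact ⟨p, by simpa [evalFrom] using heval, hp⟩
  · rintro ⟨q, hq, hmem⟩
    exact ⟨q, fun _ => I₀, by simp [evalFrom, hq], rfl, by simp, by simp, hmem⟩

theorem intervalChain_cons_iff {u : List A} {I₀ : ℕ × ℕ} {z y : RLetter A}
    {t : List (RLetter A)} :
    IntervalChain u I₀ z (y :: t) ↔
      ∃ q, stepR u z (z.origin I₀) = some q ∧ q ∈ Set.Ioo I₀.1 I₀.2 ∧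
        IntervalChain u (y.narrow I₀ q) y t := by
  constructor
  · rintro ⟨p, I, heval, rfl, hupdate, hshrink, hp⟩
    obtain ⟨q, hq, hI₁⟩ := hupdate 0 z y rfl rfl
    rw [zero_add] at hI₁
    have hnested : ∀ k ≤ t.length, (I 1).1 ≤ (I (k + 1)).1 ∧ (I (k + 1)).2 ≤ (I 1).2 := by
      intro k hk
      induction k with
      | zero => exact ⟨le_rfl, le_rfl⟩
      | succ k ih =>
        have := ih (by omega)
        have := hshrink (k + 1) (by simpa using hk)
        omega
    have hlast := hnested t.length le_rfl
    have hfirst := hshrink 0 (by simp)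
    rw [List.length_cons, Set.mem_Ioo] at hp
    refine ⟨q, hq, ?_, p, fun k => I (k + 1), ?_, hI₁, fun ℓ => hupdate (ℓ + 1),
      fun ℓ hℓ => hshrink (ℓ + 1) (by simpa using hℓ), hp⟩
    · rw [Set.mem_Ioo]
      cases y <;> simp only [zero_add, hI₁, narrow] at hfirst hlast <;> omega
    · simpa [evalFrom, hq, origin_narrow] using heval
  · rintro ⟨q, hq, hmem, p, I, heval, hI, hupdate, hshrink, hp⟩
    refine ⟨p, fun k => k.casesOn I₀ I, ?_, rfl, ?_, ?_, hp⟩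
    · simpa [evalFrom, hq, origin_narrow] using heval
    · rintro (_ | ℓ) x y' hx hy'
      · obtain rfl : z = x := by simpa using hx
        obtain rfl : y = y' := by simpa using hy'
        exact ⟨q, hq, hI⟩
      · exact hupdate ℓ x y' hx hy'
    · rintro (_ | ℓ) hℓ
      · change I₀.1 ≤ (I 0).1 ∧ (I 0).2 ≤ I₀.2 ∧ (I₀.1 < (I 0).1 ∨ (I 0).2 < I₀.2)
        rw [hI]
        rw [Set.mem_Ioo] at hmem
        cases y <;> simp only [narrow] <;> omega
      · exact hshrink ℓ (by simpa using hℓ)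

theorem RLetter.IsSplit.stepR_append {z : RLetter A} {w w₀ w₁ : List A} (h : z.IsSplit w w₀ w₁)
    (L R : List A) :
    stepR (L ++ w ++ R) z (z.origin (L.length, L.length + w.length + 1)) =
      some (L.length + w₀.length + 1) := by
  cases z with
  | X a =>
    obtain ⟨rfl, ha⟩ := h
    simpa [stepR, origin] using nextOcc_append ha L (w₁ ++ R)
  | Y a =>
    obtain ⟨rfl, ha⟩ := h
    have := prevOcc_append ha (L ++ w₀) R
    simp only [stepR, origin, List.length_append, List.length_cons, List.append_assoc] at this ⊢
    convert this using 2
    omega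

theorem exists_isSplit_of_stepR_append {L w R : List A} {z : RLetter A} {q : ℕ}
    (hq : stepR (L ++ w ++ R) z (z.origin (L.length, L.length + w.length + 1)) = some q)
    (hmem : q ∈ Set.Ioo L.length (L.length + w.length + 1)) : ∃ w₀ w₁, z.IsSplit w w₀ w₁ := by
  rw [Set.mem_Ioo] at hmem
  cases z with
  | X a =>
    have hqa := (nextOcc_eq_some_iff.1 hq).1.2
    exact List.eq_append_cons_of_mem (mem_of_getElem?_append (by omega) (by omega) hqa)
  | Y a =>
    have hqa := (prevOcc_eq_some_iff.1 hq).1.2.2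
    exact exists_last_occurrence (mem_of_getElem?_append (by omega) (by omega) hqa)

theorem exists_stepR_append_iff {L w R : List A} {z : RLetter A} {P : ℕ → Prop} :
    (∃ q, stepR (L ++ w ++ R) z (z.origin (L.length, L.length + w.length + 1)) = some q ∧
        q ∈ Set.Ioo L.length (L.length + w.length + 1) ∧ P q) ↔
      ∃ w₀ w₁, z.IsSplit w w₀ w₁ ∧ P (L.length + w₀.length + 1) := by
  constructor
  · rintro ⟨q, hq, hmem, hP⟩
    obtain ⟨w₀, w₁, h⟩ := exists_isSplit_of_stepR_append hq hmem
    obtain rfl : L.length + w₀.length + 1 = q :=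
      Option.some_inj.1 ((h.stepR_append L R).symm.trans hq)
    exact ⟨w₀, w₁, h, hP⟩
  · rintro ⟨w₀, w₁, h, hP⟩
    have hw : w₀.length < w.length := by cases z <;> obtain ⟨rfl, -⟩ := h <;> simp
    exact ⟨_, h.stepR_append L R, Set.mem_Ioo.2 (by omega), hP⟩

theorem RLetter.IsSplit.exists_narrow_eq {α : Type*} {z : RLetter α} {w w₀ w₁ : List α}
    (h : z.IsSplit w w₀ w₁) (y : RLetter α) (L R : List α) :
    ∃ L' R', L ++ w ++ R = L' ++ y.side w₀ w₁ ++ R' ∧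
      y.narrow (L.length, L.length + w.length + 1) (L.length + w₀.length + 1) =
        (L'.length, L'.length + (y.side w₀ w₁).length + 1) := by
  obtain ⟨a, rfl⟩ : ∃ a, w = w₀ ++ a :: w₁ := by cases z <;> exact ⟨_, h.1⟩
  cases y with
  | X b => exact ⟨L ++ w₀ ++ [a], R, by simp [side], by simp [side, narrow]; omega⟩
  | Y b => exact ⟨L, a :: w₁ ++ R, by simp [side], rfl⟩

theorem intervalChain_append_iff_factorCondensed (z : RLetter A) (t : List (RLetter A))
    (L w R : List A) :
    IntervalChain (L ++ w ++ R) (L.length, L.length + w.length + 1) z t ↔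
      FactorCondensed w (z :: t) := by
  induction t generalizing z L w R with
  | nil =>
    simpa [intervalChain_nil_iff, FactorCondensed] using
      exists_stepR_append_iff (L := L) (w := w) (R := R) (z := z) (P := fun _ => True)
  | cons y t ih =>
    rw [intervalChain_cons_iff, exists_stepR_append_iff, FactorCondensed]
    simp only [List.head?_cons, Option.mem_def, Option.some_inj, forall_eq']
    refine exists₂_congr fun w₀ w₁ => and_congr_right fun h => ?_
    obtain ⟨L', R', hword, hinterval⟩ := h.exists_narrow_eq y L R
    rw [hword, hinterval, ih]

theorem condensed_iff_factorCondensed (u : List A) (r : List (RLetter A)) :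
    Condensed u r ↔ FactorCondensed u r := by
  cases r with
  | nil => exact iff_of_false (fun ⟨_, _, _, h, _⟩ => nomatch h) id
  | cons z t =>
    rw [condensed_cons_iff_intervalChain]
    simpa using intervalChain_append_iff_factorCondensed z t [] u []

end Condensed

section Duality

/-- The ranker letter of the opposite direction: swapping all letters of a ranker corresponds to
reversing the word it is read on. -/
def RLetter.swap {α : Type*} : RLetter α → RLetter α
  | X a => Y a
  | Y a => X a

variable {α : Type*}

theorem RLetter.swap_involutive : Function.Involutive (swap : RLetter α → RLetter α) := by
  rintro (a | a) <;> rfl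

theorem RLetter.map_swap_involutive :
    Function.Involutive (List.map (swap : RLetter α → RLetter α)) :=
  List.map_involutive_iff.2 swap_involutive

theorem RLetter.IsSplit.reverse {z : RLetter α} {u u₀ u₁ : List α} (h : z.IsSplit u u₀ u₁) :
    z.swap.IsSplit u.reverse u₁.reverse u₀.reverse := by
  cases z <;> obtain ⟨rfl, ha⟩ := h <;> exact ⟨by simp, by simpa using ha⟩

theorem RLetter.reverse_side (y : RLetter α) (u₀ u₁ : List α) :
    (y.side u₀ u₁).reverse = y.swap.side u₁.reverse u₀.reverse := by
  cases y <;> rfl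

theorem FactorCondensed.reverse {u : List α} {r : List (RLetter α)} (h : FactorCondensed u r) :
    FactorCondensed u.reverse (r.map swap) := by
  induction r generalizing u with
  | nil => exact h
  | cons z s ih =>
    obtain ⟨u₀, u₁, hsplit, hs⟩ := h
    refine ⟨u₁.reverse, u₀.reverse, hsplit.reverse, fun y' hy' => ?_⟩
    obtain ⟨y, hy, rfl⟩ := Option.mem_map.1 (List.head?_map ▸ hy')
    exact reverse_side y u₀ u₁ ▸ ih (hs y hy)

theorem factorCondensed_reverse_iff {u : List α} {r : List (RLetter α)} :
    FactorCondensed u.reverse (r.map swap) ↔ FactorCondensed u r :=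
  ⟨fun h => by simpa only [List.reverse_reverse, map_swap_involutive r] using h.reverse,
    FactorCondensed.reverse⟩

theorem numBlocks_map_swap (r : List (RLetter α)) : numBlocks (r.map swap) = numBlocks r := by
  fun_induction numBlocks r with
  | case1 => rfl
  | case2 => rfl
  | case3 z w t ih =>
    have hdir : sameDir z.swap w.swap = sameDir z w := by cases z <;> cases w <;> rfl
    rw [← ih, List.map_cons, List.map_cons, numBlocks, hdir]

end Duality

section RankerSets

variable {α : Type*} {a : α} {m n : ℕ} {r s : List (RLetter α)}

theorem not_uRX_nil : ¬ uRX m n ([] : List (RLetter α)) := by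
  simp [uRX, RX, RY, startsX, startsY]

theorem uRX_X_cons_iff : uRX m n (X a :: s) ↔ numBlocks (X a :: s) ≤ m ∧ s.length + 1 ≤ n := by
  simp [uRX, RX, RY, startsX, startsY]

theorem uRX_Y_cons_iff : uRX m n (Y a :: s) ↔ numBlocks (Y a :: s) < m ∧ s.length + 1 < n := by
  simp [uRX, RX, RY, startsX, startsY]

theorem uRY_iff_uRX_map_swap : uRY m n r ↔ uRX m n (r.map swap) := by
  have hX : startsX (r.map swap) ↔ startsY r := by
    rcases r with _ | ⟨a | a, s⟩ <;> simp [startsX, startsY, swap]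
  have hY : startsY (r.map swap) ↔ startsX r := by
    rcases r with _ | ⟨a | a, s⟩ <;> simp [startsX, startsY, swap]
  simp only [uRX, uRY, RX, RY, numBlocks_map_swap, List.length_map, hX, hY]

theorem not_uRY_nil : ¬ uRY m n ([] : List (RLetter α)) := by
  simp [uRY, RX, RY, startsX, startsY]

theorem uRY_X_cons_iff : uRY m n (X a :: s) ↔ numBlocks (X a :: s) < m ∧ s.length + 1 < n := by
  simp [uRY, RX, RY, startsX, startsY]

theorem uRY_Y_cons_iff : uRY m n (Y a :: s) ↔ numBlocks (Y a :: s) ≤ m ∧ s.length + 1 ≤ n := by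
  simp [uRY, RX, RY, startsX, startsY]

theorem numBlocks_cons_pos (z : RLetter α) (s : List (RLetter α)) : 0 < numBlocks (z :: s) := by
  induction s generalizing z with
  | nil => exact Nat.one_pos
  | cons y s ih => exact Nat.add_pos_right _ (ih y)

theorem numBlocks_X_X (a b : α) (s : List (RLetter α)) :
    numBlocks (X a :: X b :: s) = numBlocks (X b :: s) := by
  simp [numBlocks, sameDir]

theorem numBlocks_X_Y (a b : α) (s : List (RLetter α)) :
    numBlocks (X a :: Y b :: s) = numBlocks (Y b :: s) + 1 := by
  simp [numBlocks, sameDir, add_comm]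

theorem numBlocks_map_X_le_one (w : List α) : numBlocks (w.map X) ≤ 1 := by
  induction w with
  | nil => exact Nat.zero_le _
  | cons a w ih =>
    cases w with
    | nil => exact le_rfl
    | cons b w => simpa only [List.map_cons, numBlocks_X_X] using ih

theorem numBlocks_map_Y_le_one (w : List α) : numBlocks (w.map Y) ≤ 1 := by
  simpa [← numBlocks_map_swap (w.map Y), Function.comp_def, swap] using numBlocks_map_X_le_one w

theorem uRX.mono {m' n' : ℕ} (hm : m ≤ m') (hn : n ≤ n') (h : uRX m n r) : uRX m' n' r := by
  rcases r with _ | ⟨a | a, s⟩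
  · exact absurd h not_uRX_nil
  · rw [uRX_X_cons_iff] at h ⊢; omega
  · rw [uRX_Y_cons_iff] at h ⊢; omega

theorem uRY.uRX_succ (h : uRY m n r) : uRX (m + 1) (n + 1) r := by
  rcases r with _ | ⟨a | a, s⟩
  · exact absurd h not_uRY_nil
  · rw [uRY_X_cons_iff] at h; rw [uRX_X_cons_iff]; omega
  · rw [uRY_Y_cons_iff] at h; rw [uRX_Y_cons_iff]; omega

end RankerSets

section FactorCondensed

variable {α : Type*} {a : α} {s : List (RLetter α)}

theorem factorCondensed_X_cons_iff {u₀ u₁ : List α} (ha : a ∉ u₀) :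
    FactorCondensed (u₀ ++ a :: u₁) (X a :: s) ↔
      ∀ y ∈ s.head?, FactorCondensed (y.side u₀ u₁) s := by
  refine ⟨fun ⟨u₀', u₁', ⟨hu, ha'⟩, hs⟩ => ?_, fun hs => ⟨u₀, u₁, ⟨rfl, ha⟩, hs⟩⟩
  obtain ⟨rfl, rfl⟩ := first_occurrence_unique hu ha ha'
  exact hs

theorem factorCondensed_X_X_cons_iff {u₀ u₁ : List α} {b : α} (ha : a ∉ u₀) :
    FactorCondensed (u₀ ++ a :: u₁) (X a :: X b :: s) ↔ FactorCondensed u₁ (X b :: s) := by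
  simp [factorCondensed_X_cons_iff ha, side]

theorem factorCondensed_X_Y_cons_iff {u₀ u₁ : List α} {b : α} (ha : a ∉ u₀) :
    FactorCondensed (u₀ ++ a :: u₁) (X a :: Y b :: s) ↔ FactorCondensed u₀ (Y b :: s) := by
  simp [factorCondensed_X_cons_iff ha, side]

theorem FactorCondensed.mem {u : List α} (h : FactorCondensed u (X a :: s)) : a ∈ u := by
  obtain ⟨u₀, u₁, ⟨rfl, -⟩, -⟩ := h
  simp

theorem factorCondensed_map_X_iff {u w : List α} (hw : w ≠ []) :
    FactorCondensed u (w.map X) ↔ w.Sublist u := by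
  induction w generalizing u with
  | nil => exact absurd rfl hw
  | cons a w ih =>
    by_cases ha : a ∈ u
    · obtain ⟨u₀, u₁, rfl, ha₀⟩ := List.eq_append_cons_of_mem ha
      rw [cons_sublist_append_cons_iff ha₀]
      cases w with
      | nil => simp [factorCondensed_X_cons_iff ha₀]
      | cons b w => rw [← ih (List.cons_ne_nil b w)]; exact factorCondensed_X_X_cons_iff ha₀
    · exact iff_of_false (fun h => ha h.mem) fun h => ha (h.subset List.mem_cons_self)

theorem factorCondensed_map_Y_reverse_iff {u w : List α} (hw : w ≠ []) :
    FactorCondensed u (w.reverse.map Y) ↔ w.Sublist u := by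
  have hswap : (w.reverse.map Y).map swap = w.reverse.map X := by simp [Function.comp_def, swap]
  rw [← factorCondensed_reverse_iff, hswap, factorCondensed_map_X_iff (by simpa using hw),
    List.reverse_sublist]

-- Reading `X a :: s` on `x ++ y` stays inside `x` as soon as its first block does, and `a :: w` is
-- the word spelled by that block.
theorem exists_word_factorCondensed_X_cons_iff (a : α) (s : List (RLetter α)) :
    ∃ w : List α, w.length ≤ s.length ∧ ∀ x y : List α,
      FactorCondensed x (X a :: s) ↔ FactorCondensed (x ++ y) (X a :: s) ∧ (a :: w).Sublist x := by
  have key (a : α) (s : List (RLetter α)) (w : List α) (hs : ∀ x₀ x₁ y : List α, a ∉ x₀ →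
      (FactorCondensed (x₀ ++ a :: x₁) (X a :: s) ↔
        FactorCondensed (x₀ ++ a :: (x₁ ++ y)) (X a :: s) ∧ w.Sublist x₁)) (x y : List α) :
      FactorCondensed x (X a :: s) ↔
        FactorCondensed (x ++ y) (X a :: s) ∧ (a :: w).Sublist x := by
    by_cases ha : a ∈ x
    · obtain ⟨x₀, x₁, rfl, ha₀⟩ := List.eq_append_cons_of_mem ha
      rw [hs x₀ x₁ y ha₀, cons_sublist_append_cons_iff ha₀, List.append_assoc, List.cons_append]
    · exact iff_of_false (fun h => ha h.mem) fun h => ha (h.2.subset List.mem_cons_self)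
  induction s generalizing a with
  | nil =>
    exact ⟨[], le_rfl, key _ _ _ fun _ _ _ ha => by simp [factorCondensed_X_cons_iff ha]⟩
  | cons z s ih =>
    cases z with
    | X b =>
      obtain ⟨w, hlen, hw⟩ := ih b
      refine ⟨b :: w, by simpa using hlen, key _ _ _ fun x₀ x₁ y ha => ?_⟩
      rw [factorCondensed_X_X_cons_iff ha, factorCondensed_X_X_cons_iff ha, hw x₁ y]
    | Y b =>
      exact ⟨[], Nat.zero_le _, key _ _ _ fun x₀ x₁ y ha => by
        simp [factorCondensed_X_Y_cons_iff ha]⟩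

theorem exists_word_factorCondensed_Y_cons_iff (a : α) (s : List (RLetter α)) :
    ∃ w : List α, w.length ≤ s.length + 1 ∧ ∀ x y : List α,
      FactorCondensed x (Y a :: s) ↔ FactorCondensed (y ++ x) (Y a :: s) ∧ w.Sublist x := by
  obtain ⟨w, hlen, hw⟩ := exists_word_factorCondensed_X_cons_iff a (s.map swap)
  refine ⟨(a :: w).reverse, by simpa using hlen, fun x y => ?_⟩
  have hrev (z : List α) :
      FactorCondensed z (Y a :: s) ↔ FactorCondensed z.reverse (X a :: s.map swap) :=
    factorCondensed_reverse_iff.symm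
  rw [hrev, hrev, List.reverse_append, hw x.reverse y.reverse, ← List.reverse_sublist (l₂ := x),
    List.reverse_reverse]

end FactorCondensed

section Equivalence

variable {m n : ℕ} {x y : List A}

theorem trir_iff_factorCondensed :
    trir m n x y ↔ ∀ r, uRX m n r → (FactorCondensed x r ↔ FactorCondensed y r) := by
  simp only [trir, AgreeCond, condensed_iff_factorCondensed]

theorem tril_iff_factorCondensed :
    tril m n x y ↔ ∀ r, uRY m n r → (FactorCondensed x r ↔ FactorCondensed y r) := by
  simp only [tril, AgreeCond, condensed_iff_factorCondensed]

theorem tril_iff_trir_reverse : tril m n x y ↔ trir m n x.reverse y.reverse := by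
  rw [tril_iff_factorCondensed, trir_iff_factorCondensed]
  refine Iff.trans ?_ map_swap_involutive.surjective.forall.symm
  simp only [uRY_iff_uRX_map_swap, factorCondensed_reverse_iff]

theorem trir.refl (m n : ℕ) (x : List A) : trir m n x x := fun _ _ => Iff.rfl

theorem tril.refl (m n : ℕ) (x : List A) : tril m n x x := fun _ _ => Iff.rfl

theorem trir.symm (h : trir m n x y) : trir m n y x := fun r hr => (h r hr).symm

theorem trir.mono {m' n' : ℕ} (h : trir m' n' x y) (hm : m ≤ m') (hn : n ≤ n') : trir m n x y :=
  fun r hr => h r (hr.mono hm hn)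

theorem trir.tril (h : trir (m + 1) (n + 1) x y) : tril m n x y :=
  fun r hr => h r hr.uRX_succ

theorem trir_zero_left (n : ℕ) (x y : List A) : trir 0 n x y := by
  rintro (_ | ⟨a | a, s⟩) hr
  · exact absurd hr not_uRX_nil
  · have := numBlocks_cons_pos (X a) s
    rw [uRX_X_cons_iff] at hr; omega
  · rw [uRX_Y_cons_iff] at hr; omega

theorem trir_zero_right (m : ℕ) (x y : List A) : trir m 0 x y := by
  rintro (_ | ⟨a | a, s⟩) hr
  · exact absurd hr not_uRX_nil
  · rw [uRX_X_cons_iff] at hr; omega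
  · rw [uRX_Y_cons_iff] at hr; omega

theorem tril_zero_left (n : ℕ) (x y : List A) : tril 0 n x y :=
  tril_iff_trir_reverse.2 (trir_zero_left n _ _)

theorem tril_zero_right (m : ℕ) (x y : List A) : tril m 0 x y :=
  tril_iff_trir_reverse.2 (trir_zero_right m _ _)

theorem trir.sublist_iff (h : trir (m + 1) n x y) {w : List A} (hw : w.length ≤ n) :
    w.Sublist x ↔ w.Sublist y := by
  cases w with
  | nil => simp
  | cons a w =>
    rw [← factorCondensed_map_X_iff (List.cons_ne_nil a w),
      ← factorCondensed_map_X_iff (List.cons_ne_nil a w)]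
    refine trir_iff_factorCondensed.1 h _ (uRX_X_cons_iff.2 ⟨?_, by simpa using hw⟩)
    exact (numBlocks_map_X_le_one (a :: w)).trans (Nat.le_add_left 1 m)

theorem trir.mem_iff (h : trir (m + 1) (n + 1) x y) (a : A) : a ∈ x ↔ a ∈ y := by
  simpa using h.sublist_iff (w := [a]) (by simp)

theorem tril.mem_iff (h : tril (m + 1) (n + 1) x y) (a : A) : a ∈ x ↔ a ∈ y := by
  simpa using (tril_iff_trir_reverse.1 h).mem_iff a

end Equivalence

section BackAndForth

variable {m n : ℕ} {a : A} {x x₀ x₁ y y₀ y₁ : List A}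

theorem trir.of_append_cons_right (h : trir (m + 1) (n + 1) (x₀ ++ a :: x₁) (y₀ ++ a :: y₁))
    (hx : a ∉ x₀) (hy : a ∉ y₀) : trir (m + 1) n x₁ y₁ := by
  have hagree := trir_iff_factorCondensed.1 h
  refine trir_iff_factorCondensed.2 ?_
  rintro (_ | ⟨b | b, s⟩) hr
  · exact absurd hr not_uRX_nil
  · rw [uRX_X_cons_iff] at hr
    have hXX := hagree (X a :: X b :: s)
      (uRX_X_cons_iff.2 (by rw [numBlocks_X_X, List.length_cons]; omega))
    rwa [factorCondensed_X_X_cons_iff hx, factorCondensed_X_X_cons_iff hy] at hXX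
  · rw [uRX_Y_cons_iff] at hr
    obtain ⟨w, hlen, hw⟩ := exists_word_factorCondensed_Y_cons_iff b s
    have hfull : FactorCondensed (x₀ ++ a :: x₁) (Y b :: s) ↔
        FactorCondensed (y₀ ++ a :: y₁) (Y b :: s) := hagree _ (uRX_Y_cons_iff.2 (by omega))
    have hsub := h.sublist_iff (w := a :: w) (by rw [List.length_cons]; omega)
    rw [cons_sublist_append_cons_iff hx, cons_sublist_append_cons_iff hy] at hsub
    rw [hw x₁ (x₀ ++ [a]), hw y₁ (y₀ ++ [a]), List.append_assoc, List.append_assoc]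
    exact and_congr hfull hsub

theorem trir.sublist_iff_of_append_cons
    (h : trir (m + 2) (n + 1) (x₀ ++ a :: x₁) (y₀ ++ a :: y₁)) (hx : a ∉ x₀) (hy : a ∉ y₀)
    {w : List A} (hw : w.length ≤ n) : w.Sublist x₀ ↔ w.Sublist y₀ := by
  rcases List.eq_nil_or_concat' w with rfl | ⟨w, b, rfl⟩
  · simp
  have hne : w ++ [b] ≠ [] := by simp
  have hmap : (w ++ [b]).reverse.map Y = Y b :: w.reverse.map Y := by simp
  have hmem : uRX (m + 2) (n + 1) (X a :: (w ++ [b]).reverse.map Y) := by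
    have hblocks := numBlocks_map_Y_le_one (w ++ [b]).reverse
    rw [hmap] at hblocks ⊢
    rw [uRX_X_cons_iff, numBlocks_X_Y]
    exact ⟨by omega, by simpa using hw⟩
  have hXY := trir_iff_factorCondensed.1 h _ hmem
  rwa [hmap, factorCondensed_X_Y_cons_iff hx, factorCondensed_X_Y_cons_iff hy, ← hmap,
    factorCondensed_map_Y_reverse_iff hne, factorCondensed_map_Y_reverse_iff hne] at hXY

theorem trir.of_append_cons_left (h : trir (m + 1) (n + 1) (x₀ ++ a :: x₁) (y₀ ++ a :: y₁))
    (hx : a ∉ x₀) (hy : a ∉ y₀) : RankerPaper.tril m n x₀ y₀ := by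
  have hagree := trir_iff_factorCondensed.1 h
  refine tril_iff_factorCondensed.2 ?_
  rintro (_ | ⟨b | b, s⟩) hr
  · exact absurd hr not_uRY_nil
  · rw [uRY_X_cons_iff] at hr
    obtain ⟨m, rfl⟩ := Nat.exists_eq_add_one_of_ne_zero (Nat.ne_zero_of_lt hr.1)
    obtain ⟨w, hlen, hw⟩ := exists_word_factorCondensed_X_cons_iff b s
    have hfull : FactorCondensed (x₀ ++ a :: x₁) (X b :: s) ↔
        FactorCondensed (y₀ ++ a :: y₁) (X b :: s) := hagree _ (uRX_X_cons_iff.2 (by omega))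
    have hsub : (b :: w).Sublist x₀ ↔ (b :: w).Sublist y₀ :=
      h.sublist_iff_of_append_cons hx hy (by rw [List.length_cons]; omega)
    rw [hw x₀ (a :: x₁), hw y₀ (a :: y₁)]
    exact and_congr hfull hsub
  · rw [uRY_Y_cons_iff] at hr
    have hXY := hagree (X a :: Y b :: s)
      (uRX_X_cons_iff.2 (by rw [numBlocks_X_Y, List.length_cons]; omega))
    rwa [factorCondensed_X_Y_cons_iff hx, factorCondensed_X_Y_cons_iff hy] at hXY

theorem trir_of_exists_isSplit (hxy : tril m n x y) (hyx : y ⊆ x)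
    (hsplit : ∀ a ∈ x, ∃ x₀ x₁ y₀ y₁, (X a).IsSplit x x₀ x₁ ∧ (X a).IsSplit y y₀ y₁ ∧
      tril m n x₀ y₀ ∧ trir (m + 1) n x₁ y₁) : trir (m + 1) (n + 1) x y := by
  refine trir_iff_factorCondensed.2 ?_
  rintro (_ | ⟨a | a, s⟩) hr
  · exact absurd hr not_uRX_nil
  · by_cases ha : a ∈ x
    swap
    · exact iff_of_false (fun h => ha h.mem) fun h => ha (hyx h.mem)
    obtain ⟨x₀, x₁, y₀, y₁, ⟨rfl, hx⟩, ⟨rfl, hy⟩, h₀, h₁⟩ := hsplit a ha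
    rw [uRX_X_cons_iff] at hr
    rcases s with _ | ⟨b | b, s⟩
    · simp [factorCondensed_X_cons_iff hx, factorCondensed_X_cons_iff hy]
    · rw [factorCondensed_X_X_cons_iff hx, factorCondensed_X_X_cons_iff hy]
      rw [numBlocks_X_X, List.length_cons] at hr
      exact trir_iff_factorCondensed.1 h₁ _ (uRX_X_cons_iff.2 (by omega))
    · rw [factorCondensed_X_Y_cons_iff hx, factorCondensed_X_Y_cons_iff hy]
      rw [numBlocks_X_Y, List.length_cons] at hr
      exact tril_iff_factorCondensed.1 h₀ _ (uRY_Y_cons_iff.2 (by omega))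
  · rw [uRX_Y_cons_iff] at hr
    exact tril_iff_factorCondensed.1 hxy _ (uRY_Y_cons_iff.2 (by omega))

theorem trir_succ_succ_iff :
    trir (m + 1) (n + 1) x y ↔ tril m n x y ∧ y ⊆ x ∧
      ∀ a ∈ x, ∃ x₀ x₁ y₀ y₁, (X a).IsSplit x x₀ x₁ ∧ (X a).IsSplit y y₀ y₁ ∧
        tril m n x₀ y₀ ∧ trir (m + 1) n x₁ y₁ := by
  refine ⟨fun h => ⟨h.tril, fun a => (h.mem_iff a).2, fun a ha => ?_⟩,
    fun ⟨hxy, hyx, hsplit⟩ => trir_of_exists_isSplit hxy hyx hsplit⟩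
  obtain ⟨x₀, x₁, rfl, hx⟩ := List.eq_append_cons_of_mem ha
  obtain ⟨y₀, y₁, rfl, hy⟩ := List.eq_append_cons_of_mem ((h.mem_iff a).1 ha)
  exact ⟨x₀, x₁, y₀, y₁, ⟨rfl, hx⟩, ⟨rfl, hy⟩, h.of_append_cons_left hx hy,
    h.of_append_cons_right hx hy⟩

end BackAndForth

section Congruence

variable {m n : ℕ} {x x' y y' : List A}

theorem trir.append (hx : trir m n x x') (hy : trir m n y y') :
    trir m n (x ++ y) (x' ++ y') := by
  induction n generalizing m x x' y y' with
  | zero => exact trir_zero_right m _ _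
  | succ n ih =>
    cases m with
    | zero => exact trir_zero_left _ _ _
    | succ m =>
      have ih_left {x x' y y' : List A} (hx : RankerPaper.tril m n x x')
          (hy : RankerPaper.tril m n y y') : RankerPaper.tril m n (x ++ y) (x' ++ y') := by
        rw [tril_iff_trir_reverse] at *
        simpa only [List.reverse_append] using ih hy hx
      obtain ⟨hxx', hx'x, hsplitx⟩ := trir_succ_succ_iff.1 hx
      obtain ⟨hyy', hy'y, hsplity⟩ := trir_succ_succ_iff.1 hy
      refine trir_succ_succ_iff.2 ⟨ih_left hxx' hyy', List.append_subset.2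
        ⟨List.subset_append_of_subset_left _ hx'x, List.subset_append_of_subset_right _ hy'y⟩,
        fun a ha => ?_⟩
      by_cases hax : a ∈ x
      · obtain ⟨x₀, x₁, x₀', x₁', ⟨rfl, ha₀⟩, ⟨rfl, ha₀'⟩, h₀, h₁⟩ := hsplitx a hax
        exact ⟨x₀, x₁ ++ y, x₀', x₁' ++ y', ⟨by simp, ha₀⟩, ⟨by simp, ha₀'⟩, h₀,
          ih h₁ (hy.mono le_rfl n.le_succ)⟩
      · have hay : a ∈ y := (List.mem_append.1 ha).resolve_left hax
        obtain ⟨y₀, y₁, y₀', y₁', ⟨rfl, ha₀⟩, ⟨rfl, ha₀'⟩, h₀, h₁⟩ := hsplity a hay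
        exact ⟨x ++ y₀, y₁, x' ++ y₀', y₁', ⟨by simp, by simp [hax, ha₀]⟩,
          ⟨by simp, by simp [ha₀', ← hx.mem_iff a, hax]⟩, ih_left hxx' h₀, h₁⟩

theorem tril.append (hx : tril m n x x') (hy : tril m n y y') :
    tril m n (x ++ y) (x' ++ y') := by
  rw [tril_iff_trir_reverse] at *
  simpa only [List.reverse_append] using trir.append hy hx

theorem trir_one_iff_sublist :
    trir 1 n x y ↔ ∀ w : List A, w.length ≤ n → (w.Sublist x ↔ w.Sublist y) := by
  refine ⟨fun h w => h.sublist_iff, fun h => ?_⟩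
  induction n generalizing x y with
  | zero => exact trir_zero_right 1 x y
  | succ n ih =>
    have hmem (a : A) : a ∈ x ↔ a ∈ y := by simpa using h [a] (by simp)
    refine trir_succ_succ_iff.2 ⟨tril_zero_left n x y, fun a => (hmem a).2, fun a ha => ?_⟩
    obtain ⟨x₀, x₁, rfl, hx⟩ := List.eq_append_cons_of_mem ha
    obtain ⟨y₀, y₁, rfl, hy⟩ := List.eq_append_cons_of_mem ((hmem a).1 ha)
    refine ⟨x₀, x₁, y₀, y₁, ⟨rfl, hx⟩, ⟨rfl, hy⟩, tril_zero_left n _ _, ih fun w hw => ?_⟩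
    have haw := h (a :: w) (by simpa using hw)
    rwa [cons_sublist_append_cons_iff hx, cons_sublist_append_cons_iff hy] at haw

theorem trir_depth_one_iff : trir (m + 1) 1 x y ↔ ∀ a, a ∈ x ↔ a ∈ y := by
  refine ⟨fun h => h.mem_iff, fun h => trir_succ_succ_iff.2
    ⟨tril_zero_right m x y, fun a => (h a).2, fun a ha => ?_⟩⟩
  obtain ⟨x₀, x₁, hx⟩ := List.eq_append_cons_of_mem ha
  obtain ⟨y₀, y₁, hy⟩ := List.eq_append_cons_of_mem ((h a).1 ha)
  exact ⟨x₀, x₁, y₀, y₁, hx, hy, tril_zero_right m _ _, trir_zero_right _ _ _⟩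

end Congruence

section Substitution

variable {B : Type*} [DecidableEq B] {m n : ℕ} {u v : List A}

theorem trir_one_flatMap (h : trir 1 n u v) (f : A → List B) :
    trir 1 n (u.flatMap f) (v.flatMap f) := by
  have transfer {u v : List A} (h : trir 1 n u v) {w : List B} (hw : w.length ≤ n)
      (hwu : w.Sublist (u.flatMap f)) : w.Sublist (v.flatMap f) := by
    obtain ⟨t, htu, hlen, hwt⟩ := exists_sublist_of_sublist_flatMap hwu
    exact hwt.trans (((h.sublist_iff (hlen.trans hw)).1 htu).flatMap f)
  exact trir_one_iff_sublist.2 fun w hw => ⟨transfer h hw, transfer h.symm hw⟩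

theorem trir.flatMap (h : trir m n u v) (f : A → List B) :
    trir m n (u.flatMap f) (v.flatMap f) := by
  induction n generalizing m u v f with
  | zero => exact trir_zero_right m _ _
  | succ n ih =>
    rcases m with _ | _ | m
    · exact trir_zero_left _ _ _
    · exact trir_one_flatMap h f
    have hmem (b : B) : b ∈ u.flatMap f ↔ b ∈ v.flatMap f := by
      simp only [List.mem_flatMap, h.mem_iff]
    rcases n with _ | n
    · exact trir_depth_one_iff.2 hmem
    have ih_left {u v : List A} (h : RankerPaper.tril (m + 1) (n + 1) u v) :
        RankerPaper.tril (m + 1) (n + 1) (u.flatMap f) (v.flatMap f) := by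
      rw [tril_iff_trir_reverse] at *
      simpa only [List.reverse_flatMap] using ih h (List.reverse ∘ f)
    refine trir_succ_succ_iff.2 ⟨ih_left h.tril, fun b => (hmem b).2, fun b hb => ?_⟩
    obtain ⟨u₀, a, u₁, rfl, hba, hbu₀⟩ := exists_first_of_mem_flatMap hb
    have hau₀ : a ∉ u₀ := fun ha => hbu₀ (List.mem_flatMap_of_mem ha hba)
    obtain ⟨v₀, v₁, rfl, hav₀⟩ := List.eq_append_cons_of_mem ((h.mem_iff a).1 (by simp))
    have h₀ := ih_left (h.of_append_cons_left hau₀ hav₀)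
    have h₁ := ih (h.of_append_cons_right hau₀ hav₀) f
    obtain ⟨p, q, hpq, hbp⟩ := List.eq_append_cons_of_mem hba
    have hbv₀ : b ∉ v₀.flatMap f := fun hb => hbu₀ ((h₀.mem_iff b).2 hb)
    exact ⟨u₀.flatMap f ++ p, q ++ u₁.flatMap f, v₀.flatMap f ++ p, q ++ v₁.flatMap f,
      ⟨by simp [hpq], List.not_mem_append hbu₀ hbp⟩, ⟨by simp [hpq], List.not_mem_append hbv₀ hbp⟩,
      h₀.append (.refl _ _ p), trir.append (.refl _ _ q) h₁⟩

theorem tril.flatMap (h : tril m n u v) (f : A → List B) :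
    tril m n (u.flatMap f) (v.flatMap f) := by
  rw [tril_iff_trir_reverse] at *
  simpa only [List.reverse_flatMap] using trir.flatMap h (List.reverse ∘ f)

theorem toList_map_eq_flatMap {α β : Type*} (φ : FreeMonoid α →* FreeMonoid β) (u : List α) :
    FreeMonoid.toList (φ (FreeMonoid.ofList u)) =
      u.flatMap fun a => FreeMonoid.toList (φ (FreeMonoid.of a)) := by
  induction u with
  | nil => simp
  | cons a u ih => simp [ih]

theorem statement10_general (m n : ℕ) (φ : FreeMonoid A →* FreeMonoid B) (u v : List A) :
    (trir m n u v →
       trir m n (FreeMonoid.toList (φ (FreeMonoid.ofList u)))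
                (FreeMonoid.toList (φ (FreeMonoid.ofList v)))) ∧
    (tril m n u v →
       tril m n (FreeMonoid.toList (φ (FreeMonoid.ofList u)))
                (FreeMonoid.toList (φ (FreeMonoid.ofList v)))) := by
  simp only [toList_map_eq_flatMap]
  exact ⟨fun h => h.flatMap _, fun h => h.flatMap _⟩

end Substitution

/-- Monoid morphisms between free monoids preserve the relations
`⊳_{m,n}` and `⊲_{m,n}`. -/
theorem statement10 {B : Type*} [DecidableEq B] [Fintype A] [Fintype B]
    (m n : ℕ) (hm : 1 ≤ m) (hmn : m ≤ n)
    (φ : FreeMonoid A →* FreeMonoid B) (u v : List A) :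
    (trir m n u v →
       trir m n (FreeMonoid.toList (φ (FreeMonoid.ofList u)))
                (FreeMonoid.toList (φ (FreeMonoid.ofList v)))) ∧
    (tril m n u v →
       tril m n (FreeMonoid.toList (φ (FreeMonoid.ofList u)))
                (FreeMonoid.toList (φ (FreeMonoid.ofList v)))) :=
  statement10_general m n φ u v

end RankerPaper
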